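/- (Monogamy of steering.) Let ψ be a unit vector in ℂ²⊗ℂ²⊗ℂ² (qubits ordered Alice, Bob, Charlie), let b be Bob's Bloch vector, bⱼ = Re tr(ρ_B σⱼ), and assume ‖b‖ < 1; set γ_b = 1/√(1−‖b‖²). Define the volumes of the ellipsoids steered by Bob: V_{A|B} = (4π/3)γ_b⁴|det Θ(ρ_{AB})| and V_{C|B} = (4π/3)γ_b⁴|det Θ(ρ_{BC})|. Then √V_{A|B} + √V_{C|B} ≤ √(4π/3); equivalently √|det Θ(ρ_{AB})| + √|det Θ(ρ_{BC})| ≤ 1 − ‖b‖². -/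

import Mathlib

open Matrix Kronecker Polynomial
open scoped ComplexOrder

noncomputable section

/-- The Pauli matrices: `pauli 0 = I₂`, `pauli 1 = σ₁`, `pauli 2 = σ₂`, `pauli 3 = σ₃`. -/
def pauli : Fin 4 → Matrix (Fin 2) (Fin 2) ℂ
  | 0 => !![1, 0; 0, 1]
  | 1 => !![0, 1; 1, 0]
  | 2 => !![0, -Complex.I; Complex.I, 0]
  | 3 => !![1, 0; 0, -1]

/-- Euclidean norm of a vector in ℝ³. -/
def norm3 (v : Fin 3 → ℝ) : ℝ := Real.sqrt (∑ i, v i ^ 2)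

/-- The canonical axis-aligned two-qubit operator with steering-ellipsoid centre `c`
and signed semiaxes `t`:
`ρ̃(c,t) = (1/4)(I₄ + Σᵢ cᵢ (σᵢ⊗σ₀) + Σᵢ tᵢ (σᵢ⊗σᵢ))`. -/
def rhoTilde (c t : Fin 3 → ℝ) : Matrix (Fin 2 × Fin 2) (Fin 2 × Fin 2) ℂ :=
  (1 / 4 : ℂ) • ((1 : Matrix (Fin 2 × Fin 2) (Fin 2 × Fin 2) ℂ)
    + ∑ i : Fin 3, (c i : ℂ) • (pauli i.succ ⊗ₖ pauli 0)
    + ∑ i : Fin 3, (t i : ℂ) • (pauli i.succ ⊗ₖ pauli i.succ))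

/-- The Pauli-basis expansion matrix `Θ(ρ)_{μν} = Re tr(ρ (σ_μ ⊗ σ_ν))`. -/
def Theta (ρ : Matrix (Fin 2 × Fin 2) (Fin 2 × Fin 2) ℂ) : Matrix (Fin 4) (Fin 4) ℝ :=
  Matrix.of fun μ ν => ((ρ * (pauli μ ⊗ₖ pauli ν)).trace).re

/-!
Write the state of two of the three qubits as `ρ = |P₀⟩⟨P₀| + |P₁⟩⟨P₁|`, with `P₀`, `P₁` the slices
of `ψ` along the index of the remaining qubit, read as `2 × 2` matrices. Up to the change to the
Pauli basis, unitary up to a scalar, `Θ(ρ)` is the realigned matrix `P₀ ⊗ conj P₀ + P₁ ⊗ conj P₁`,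
whose determinant is a resultant of two binary quadratic forms. This gives
`|det Θ(ρ)| = T² - 4 |Det ψ|²`, where `T = tr (ρ ρ̃)` is the overlap of `ρ` with its spin flip and
`Det` is Cayley's hyperdeterminant; in particular `√|det Θ(ρ)| ≤ T`.

On the other hand `T = (tr ρ)² + tr ρ² - tr ρ₁² - tr ρ₂²` for the marginals `ρ₁`, `ρ₂` of `ρ`. As
`ψ` is pure, `tr ρ_AB² = tr ρ_C²` and `tr ρ_BC² = tr ρ_A²`, so the purities of Alice and Charlie
cancel in `T_AB + T_BC = 2 - 2 tr ρ_B² = 1 - ‖b‖²`.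
-/

open QuadraticMap (polar)

section TwoByTwo

variable {R : Type*} [CommRing R]

theorem polar_det_fin_two (A B : Matrix (Fin 2) (Fin 2) R) :
    polar det A B = A 0 0 * B 1 1 + A 1 1 * B 0 0 - A 0 1 * B 1 0 - A 1 0 * B 0 1 := by
  simp only [polar, det_fin_two, Matrix.add_apply]
  ring

theorem polar_det_self (A : Matrix (Fin 2) (Fin 2) R) : polar det A A = 2 * A.det := by
  rw [polar_det_fin_two, det_fin_two]
  ring

theorem polar_det_map {S : Type*} [CommRing S] (f : R →+* S) (A B : Matrix (Fin 2) (Fin 2) R) :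
    polar det (A.map f) (B.map f) = f (polar det A B) := by
  simp only [polar_det_fin_two, map_apply, map_add, map_sub, map_mul]

theorem polar_det_mul_polar_det (A B C D : Matrix (Fin 2) (Fin 2) R) :
    polar det A B * polar det C D =
      (A * C).trace * (B * D).trace + (A * D).trace * (B * C).trace
        - (A * C * (B * D)).trace - (C * A * (D * B)).trace := by
  simp only [polar_det_fin_two, trace_fin_two, mul_apply, Fin.sum_univ_two]
  ring

theorem det_fin_four (A : Matrix (Fin 4) (Fin 4) R) :
    A.det =
      (A 0 0 * A 1 1 - A 0 1 * A 1 0) * (A 2 2 * A 3 3 - A 2 3 * A 3 2)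
        - (A 0 0 * A 1 2 - A 0 2 * A 1 0) * (A 2 1 * A 3 3 - A 2 3 * A 3 1)
        + (A 0 0 * A 1 3 - A 0 3 * A 1 0) * (A 2 1 * A 3 2 - A 2 2 * A 3 1)
        + (A 0 1 * A 1 2 - A 0 2 * A 1 1) * (A 2 0 * A 3 3 - A 2 3 * A 3 0)
        - (A 0 1 * A 1 3 - A 0 3 * A 1 1) * (A 2 0 * A 3 2 - A 2 2 * A 3 0)
        + (A 0 2 * A 1 3 - A 0 3 * A 1 2) * (A 2 0 * A 3 1 - A 2 1 * A 3 0) := by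
  rw [det_succ_row_zero, Fin.sum_univ_four]
  simp only [det_fin_three, submatrix_apply, Fin.succAbove, Fin.reduceSucc, Fin.reduceCastSucc,
    Fin.reduceLT, Fin.succ_zero_eq_one, Fin.succ_one_eq_two, Fin.castSucc_zero, Fin.castSucc_one,
    Fin.isValue, ↓reduceIte, lt_self_iff_false, zero_lt_one, Fin.lt_one_iff, Fin.reduceEq,
    Fin.coe_ofNat_eq_mod]
  ring

/-- The right-hand side is the resultant of the binary quadratic forms `det (x A + y B)` and
`det (x D - y C)`. -/
theorem det_kronecker_add_kronecker (A B C D : Matrix (Fin 2) (Fin 2) R) :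
    (A ⊗ₖ C + B ⊗ₖ D).det =
      (A.det * C.det - B.det * D.det) ^ 2
        + (A.det * C.det + B.det * D.det) * (polar det A B * polar det C D)
        + A.det * B.det * polar det C D ^ 2 + C.det * D.det * polar det A B ^ 2 := by
  let e : Fin 4 ≃ Fin 2 × Fin 2 := (finProdFinEquiv (m := 2) (n := 2)).symm
  have e0 : e 0 = (0, 0) := rfl
  have e1 : e 1 = (0, 1) := rfl
  have e2 : e 2 = (1, 0) := rfl
  have e3 : e 3 = (1, 1) := rfl
  rw [← det_submatrix_equiv_self e, det_fin_four]
  simp only [submatrix_apply, e0, e1, e2, e3, Matrix.add_apply, kroneckerMap_apply, det_fin_two,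
    polar_det_fin_two]
  ring

/-- Cayley's hyperdeterminant of the `2 × 2 × 2` array with slices `A` and `B`, encoded as the
discriminant of the binary quadratic form `det (x A + y B)`. It measures the genuinely tripartite
part of the entanglement of a three-qubit state. -/
def hyperdet (A B : Matrix (Fin 2) (Fin 2) R) : R :=
  discrim A.det (polar det A B) B.det

end TwoByTwo

section Realignment

variable {ι m n : Type*} [Fintype ι]

/-- The realignment of a bipartite operator: its entries regrouped so that `σ ⊗ₖ τ` becomes the
rank-one matrix formed from the entries of `σ` and those of `τ`. -/
def realign {R : Type*} (ρ : Matrix (m × n) (m × n) R) : Matrix (m × m) (n × n) R :=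
  of fun p q => ρ (p.1, q.1) (p.2, q.2)

/-- The bipartite operator `∑ γ, |P γ⟩⟨P γ|`, where the matrix `P γ` is read as the vector with
components `P γ i j`. -/
def ensembleState (P : ι → Matrix m n ℂ) : Matrix (m × n) (m × n) ℂ :=
  of fun p q => ∑ γ, P γ p.1 p.2 * starRingEnd ℂ (P γ q.1 q.2)

theorem isHermitian_ensembleState (P : ι → Matrix m n ℂ) : (ensembleState P).IsHermitian := by
  ext p q
  simp [ensembleState, mul_comm]

theorem realign_ensembleState (P : ι → Matrix m n ℂ) :
    realign (ensembleState P) = ∑ γ, P γ ⊗ₖ (P γ).map (starRingEnd ℂ) := by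
  ext p q
  simp [realign, ensembleState, Matrix.sum_apply]

end Realignment

section Pauli

theorem isHermitian_pauli (μ : Fin 4) : (pauli μ).IsHermitian := by
  fin_cases μ <;> ext i j <;> fin_cases i <;> fin_cases j <;> simp [pauli]

theorem sum_sq_trace_mul_pauli (ρ : Matrix (Fin 2) (Fin 2) ℂ) :
    ∑ j : Fin 3, (ρ * pauli j.succ).trace ^ 2 = 2 * (ρ * ρ).trace - ρ.trace ^ 2 := by
  have x : (ρ * pauli 1).trace = ρ 0 1 + ρ 1 0 := by
    simp [pauli, trace_fin_two, mul_apply]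
  have y : (ρ * pauli 2).trace = Complex.I * (ρ 0 1 - ρ 1 0) := by
    simp [pauli, trace_fin_two, mul_apply, add_mul, mul_comm Complex.I, sub_eq_add_neg]
  have z : (ρ * pauli 3).trace = ρ 0 0 - ρ 1 1 := by
    simp [pauli, trace_fin_two, mul_apply, sub_eq_add_neg]
  calc ∑ j : Fin 3, (ρ * pauli j.succ).trace ^ 2
      = (ρ * pauli 1).trace ^ 2 + (ρ * pauli 2).trace ^ 2 + (ρ * pauli 3).trace ^ 2 :=
        Fin.sum_univ_three _
    _ = 2 * (ρ * ρ).trace - ρ.trace ^ 2 := by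
        simp only [x, y, z, trace_fin_two, mul_apply, Fin.sum_univ_two]
        linear_combination (ρ 0 1 - ρ 1 0) ^ 2 * Complex.I_sq

theorem coe_re_trace_mul {n : Type*} [Fintype n] {A B : Matrix n n ℂ}
    (hA : A.IsHermitian) (hB : B.IsHermitian) : (((A * B).trace.re : ℝ) : ℂ) = (A * B).trace := by
  rw [← Complex.conj_eq_iff_re, starRingEnd_apply, ← trace_conjTranspose, conjTranspose_mul, hA.eq,
    hB.eq, trace_mul_comm]

/-- The matrix of the Pauli coordinates `A ↦ tr (A σ_μ)` with respect to the matrix units; the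
column `(i, j)` belongs to the matrix unit at position `(i, j)`. -/
def pauliCoord : Matrix (Fin 4) (Fin 2 × Fin 2) ℂ :=
  of fun μ p => pauli μ p.2 p.1

theorem pauliCoord_mul_conjTranspose : pauliCoord * pauliCoordᴴ = (2 : ℂ) • 1 := by
  ext μ ν
  fin_cases μ <;> fin_cases ν <;>
    simp [pauliCoord, pauli, mul_apply, Fintype.sum_prod_type, one_add_one_eq_two]

theorem norm_det_pauliCoord_mul_mul_transpose (M : Matrix (Fin 2 × Fin 2) (Fin 2 × Fin 2) ℂ) :
    ‖(pauliCoord * M * pauliCoordᵀ).det‖ = 16 * ‖M.det‖ := by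
  let e : Fin 4 ≃ Fin 2 × Fin 2 := (finProdFinEquiv (m := 2) (n := 2)).symm
  let S := pauliCoord.submatrix id e
  have hS : ‖S.det‖ ^ 2 = 16 := by
    have h : S * Sᴴ = (2 : ℂ) • 1 := by
      rw [conjTranspose_submatrix, submatrix_mul_equiv, pauliCoord_mul_conjTranspose,
        submatrix_id_id]
    calc ‖S.det‖ ^ 2 = ‖(S * Sᴴ).det‖ := by
          rw [det_mul, det_conjTranspose, norm_mul, norm_star, sq]
      _ = 16 := by
          rw [h, det_smul, det_one, Fintype.card_fin]
          norm_num
  have hM : pauliCoord * M * pauliCoordᵀ = S * M.submatrix e e * Sᵀ := by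
    rw [transpose_submatrix, submatrix_mul_equiv, submatrix_mul_equiv, submatrix_id_id]
  rw [hM, det_mul, det_mul, det_transpose, det_submatrix_equiv_self, norm_mul, norm_mul, ← hS]
  ring

theorem map_Theta {ρ : Matrix (Fin 2 × Fin 2) (Fin 2 × Fin 2) ℂ} (hρ : ρ.IsHermitian) :
    (Theta ρ).map Complex.ofRealHom = pauliCoord * realign ρ * pauliCoordᵀ := by
  ext μ ν
  have hσ : (pauli μ ⊗ₖ pauli ν).IsHermitian := by
    rw [IsHermitian, conjTranspose_kronecker, isHermitian_pauli μ, isHermitian_pauli ν]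
  rw [map_apply, Theta, of_apply, Complex.ofRealHom_eq_coe, coe_re_trace_mul hρ hσ]
  simp only [trace, diag, mul_apply, Fintype.sum_prod_type, Fin.sum_univ_two, kroneckerMap_apply,
    transpose_apply, pauliCoord, realign, of_apply]
  ring

theorem abs_det_Theta {ρ : Matrix (Fin 2 × Fin 2) (Fin 2 × Fin 2) ℂ} (hρ : ρ.IsHermitian) :
    |(Theta ρ).det| = 16 * ‖(realign ρ).det‖ := by
  rw [← norm_det_pauliCoord_mul_mul_transpose, ← map_Theta hρ, ← RingHom.mapMatrix_apply,
    ← RingHom.map_det, Complex.ofRealHom_eq_coe, Complex.norm_real, Real.norm_eq_abs]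

end Pauli

section SpinFlip

/-- The entanglement monotone `tr (ρ ρ̃)` of the two-qubit operator `ρ = ensembleState P`, with `ρ̃`
Wootters' spin flip of `ρ`. The values of the polarised determinant that encode it are the
overlaps between the vectors `P γ` and their spin flips. -/
def spinFlipOverlap {ι : Type*} [Fintype ι] (P : ι → Matrix (Fin 2) (Fin 2) ℂ) : ℝ :=
  ∑ γ, ∑ δ, ‖polar det (P γ) (P δ)‖ ^ 2

theorem spinFlipOverlap_fin_two (P : Fin 2 → Matrix (Fin 2) (Fin 2) ℂ) :
    spinFlipOverlap P =
      4 * ‖(P 0).det‖ ^ 2 + 4 * ‖(P 1).det‖ ^ 2 + 2 * ‖polar det (P 0) (P 1)‖ ^ 2 := by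
  simp only [spinFlipOverlap, Fin.sum_univ_two, polar_det_self, QuadraticMap.polar_comm det (P 1),
    norm_mul, Complex.norm_ofNat]
  ring

theorem two_mul_norm_hyperdet_le (P : Fin 2 → Matrix (Fin 2) (Fin 2) ℂ) :
    2 * ‖hyperdet (P 0) (P 1)‖ ≤ spinFlipOverlap P := by
  have h : ‖hyperdet (P 0) (P 1)‖ ≤
      ‖polar det (P 0) (P 1)‖ ^ 2 + 4 * (‖(P 0).det‖ * ‖(P 1).det‖) := by
    refine (norm_sub_le _ _).trans_eq ?_
    simp only [norm_pow, norm_mul, Complex.norm_ofNat, mul_assoc]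
  rw [spinFlipOverlap_fin_two]
  linarith [two_mul_le_add_sq ‖(P 0).det‖ ‖(P 1).det‖]

theorem sixteen_mul_det_realign_ensembleState (P : Fin 2 → Matrix (Fin 2) (Fin 2) ℂ) :
    16 * (realign (ensembleState P)).det =
      ((spinFlipOverlap P ^ 2 - 4 * ‖hyperdet (P 0) (P 1)‖ ^ 2 : ℝ) : ℂ) := by
  rw [realign_ensembleState, Fin.sum_univ_two, det_kronecker_add_kronecker, polar_det_map,
    ← RingHom.mapMatrix_apply, ← RingHom.mapMatrix_apply, ← RingHom.map_det, ← RingHom.map_det,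
    spinFlipOverlap_fin_two]
  push_cast
  simp only [hyperdet, discrim, ← Complex.mul_conj', map_sub, map_mul, map_pow, map_ofNat]
  ring

theorem abs_det_Theta_ensembleState (P : Fin 2 → Matrix (Fin 2) (Fin 2) ℂ) :
    |(Theta (ensembleState P)).det| =
      spinFlipOverlap P ^ 2 - 4 * ‖hyperdet (P 0) (P 1)‖ ^ 2 := by
  have h := pow_le_pow_left₀ (by positivity) (two_mul_norm_hyperdet_le P) 2
  calc |(Theta (ensembleState P)).det| = ‖16 * (realign (ensembleState P)).det‖ := by
        rw [abs_det_Theta (isHermitian_ensembleState P), norm_mul, Complex.norm_ofNat]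
    _ = spinFlipOverlap P ^ 2 - 4 * ‖hyperdet (P 0) (P 1)‖ ^ 2 := by
        rw [sixteen_mul_det_realign_ensembleState, Complex.norm_real, Real.norm_of_nonneg]
        linarith

theorem sqrt_abs_det_Theta_ensembleState_le (P : Fin 2 → Matrix (Fin 2) (Fin 2) ℂ) :
    √|(Theta (ensembleState P)).det| ≤ spinFlipOverlap P := by
  refine Real.sqrt_le_iff.mpr ⟨?_, ?_⟩
  · unfold spinFlipOverlap
    positivity
  · rw [abs_det_Theta_ensembleState]
    linarith [sq_nonneg ‖hyperdet (P 0) (P 1)‖]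

end SpinFlip

section Marginals

variable {ι m n : Type*} [Fintype ι] [Fintype n]

/-- The reduced operator of `ensembleState P` on the first tensor factor. -/
def leftMarginal (P : ι → Matrix m n ℂ) : Matrix m m ℂ :=
  ∑ γ, P γ * (P γ)ᴴ

theorem isHermitian_leftMarginal (P : ι → Matrix m n ℂ) : (leftMarginal P).IsHermitian := by
  simp [leftMarginal, IsHermitian, conjTranspose_sum, conjTranspose_mul]

variable [Fintype m]

/-- The transpose of the reduced operator of `ensembleState P` on the second tensor factor. -/
def rightMarginal (P : ι → Matrix m n ℂ) : Matrix n n ℂ :=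
  ∑ γ, (P γ)ᴴ * P γ

/-- The reduced operator on the system indexed by `ι` that purifies `ensembleState P`: the Gram
matrix of the vectors `P γ`. -/
def gramMarginal (P : ι → Matrix m n ℂ) : Matrix ι ι ℂ :=
  of fun γ δ => (P γ * (P δ)ᴴ).trace

theorem trace_gramMarginal (P : ι → Matrix m n ℂ) :
    (gramMarginal P).trace = (leftMarginal P).trace :=
  (trace_sum _ _).symm

theorem coe_spinFlipOverlap (P : ι → Matrix (Fin 2) (Fin 2) ℂ) :
    (spinFlipOverlap P : ℂ) =
      (leftMarginal P).trace ^ 2 + (gramMarginal P * gramMarginal P).trace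
        - (leftMarginal P * leftMarginal P).trace - (rightMarginal P * rightMarginal P).trace := by
  have overlap (γ δ : ι) : ((‖polar det (P γ) (P δ)‖ ^ 2 : ℝ) : ℂ) =
      (P γ * (P γ)ᴴ).trace * (P δ * (P δ)ᴴ).trace + (P γ * (P δ)ᴴ).trace * (P δ * (P γ)ᴴ).trace
        - (P γ * (P γ)ᴴ * (P δ * (P δ)ᴴ)).trace - ((P γ)ᴴ * P γ * ((P δ)ᴴ * P δ)).trace := by
    rw [← polar_det_mul_polar_det, Complex.ofReal_pow, ← Complex.mul_conj']
    simp only [polar_det_fin_two, conjTranspose_apply, map_sub, map_add, map_mul,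
      starRingEnd_apply]
    ring
  have gram : (gramMarginal P * gramMarginal P).trace =
      ∑ γ, ∑ δ, (P γ * (P δ)ᴴ).trace * (P δ * (P γ)ᴴ).trace := rfl
  simp only [spinFlipOverlap, Complex.ofReal_sum, overlap, Finset.sum_add_distrib,
    Finset.sum_sub_distrib]
  simp only [gram, leftMarginal, rightMarginal, trace_sum, sq, Finset.sum_mul_sum]

end Marginals

section ThreeQubits

variable (ψ : Fin 2 → Fin 2 → Fin 2 → ℂ)

/-- The slices of a three-qubit tensor along Alice's index, an ensemble for the state of Bob and
Charlie. -/
def sliceA (a : Fin 2) : Matrix (Fin 2) (Fin 2) ℂ :=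
  of fun b c => ψ a b c

/-- The slices of a three-qubit tensor along Charlie's index, an ensemble for the state of Alice
and Bob. -/
def sliceC (c : Fin 2) : Matrix (Fin 2) (Fin 2) ℂ :=
  of fun a b => ψ a b c

theorem leftMarginal_sliceA : leftMarginal (sliceA ψ) =
    of fun b b' => ∑ a, ∑ c, ψ a b c * starRingEnd ℂ (ψ a b' c) := by
  ext b b'
  simp [leftMarginal, sliceA, Matrix.sum_apply, mul_apply]

theorem trace_leftMarginal_sliceA : (leftMarginal (sliceA ψ)).trace =
    ((∑ a, ∑ b, ∑ c, Complex.normSq (ψ a b c) : ℝ) : ℂ) := by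
  simp only [leftMarginal_sliceA, trace, diag, of_apply, Complex.mul_conj, Complex.ofReal_sum]
  exact Finset.sum_comm

theorem leftMarginal_sliceC : leftMarginal (sliceC ψ) = gramMarginal (sliceA ψ) := by
  ext a a'
  simp only [leftMarginal, gramMarginal, sliceA, sliceC, Matrix.sum_apply, mul_apply, trace, diag,
    of_apply, conjTranspose_apply]
  exact Finset.sum_comm

theorem rightMarginal_sliceC : rightMarginal (sliceC ψ) = (leftMarginal (sliceA ψ))ᵀ := by
  ext b b'
  simp only [leftMarginal, rightMarginal, sliceA, sliceC, Matrix.sum_apply, mul_apply,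
    transpose_apply, of_apply, conjTranspose_apply, mul_comm]
  exact Finset.sum_comm

theorem gramMarginal_sliceC : gramMarginal (sliceC ψ) = (rightMarginal (sliceA ψ))ᵀ := by
  ext c c'
  simp only [gramMarginal, rightMarginal, sliceA, sliceC, Matrix.sum_apply, mul_apply, trace, diag,
    transpose_apply, of_apply, conjTranspose_apply, mul_comm]

theorem coe_spinFlipOverlap_sliceC_add_sliceA :
    ((spinFlipOverlap (sliceC ψ) + spinFlipOverlap (sliceA ψ) : ℝ) : ℂ) =
      2 * (leftMarginal (sliceA ψ)).trace ^ 2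
        - 2 * (leftMarginal (sliceA ψ) * leftMarginal (sliceA ψ)).trace := by
  rw [Complex.ofReal_add, coe_spinFlipOverlap, coe_spinFlipOverlap, leftMarginal_sliceC,
    rightMarginal_sliceC, gramMarginal_sliceC, trace_gramMarginal, trace_transpose_mul,
    trace_transpose_mul]
  ring

theorem spinFlipOverlap_sliceC_add_sliceA :
    spinFlipOverlap (sliceC ψ) + spinFlipOverlap (sliceA ψ) =
      (∑ a, ∑ b, ∑ c, Complex.normSq (ψ a b c)) ^ 2
        - ∑ j : Fin 3, (leftMarginal (sliceA ψ) * pauli j.succ).trace.re ^ 2 := by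
  apply Complex.ofReal_injective
  rw [coe_spinFlipOverlap_sliceC_add_sliceA]
  have bloch := sum_sq_trace_mul_pauli (leftMarginal (sliceA ψ))
  push_cast
  simp only [coe_re_trace_mul (isHermitian_leftMarginal _) (isHermitian_pauli _), bloch]
  rw [trace_leftMarginal_sliceA]
  push_cast
  ring

end ThreeQubits

theorem sqrt_mul_pow_four_mul {k : ℝ} (hk : 0 ≤ k) (γ d : ℝ) :
    √(k * γ ^ 4 * d) = √k * (γ ^ 2 * √d) := by
  rw [mul_assoc, Real.sqrt_mul hk, Real.sqrt_mul (by positivity),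
    show γ ^ 4 = (γ ^ 2) ^ 2 by ring, Real.sqrt_sq (sq_nonneg γ)]

/-- Monogamy of steering: for a pure three-qubit state,
`√V_{A|B} + √V_{C|B} ≤ √(4π/3)`, where `V_{A|B} = (4π/3)γ_b⁴|det Θ(ρ_AB)|` and
`V_{C|B} = (4π/3)γ_b⁴|det Θ(ρ_BC)|` are the volumes of the ellipsoids steered by Bob. -/
theorem stmt18 (ψ : Fin 2 → Fin 2 → Fin 2 → ℂ)
    (hunit : ∑ a : Fin 2, ∑ b : Fin 2, ∑ c : Fin 2, Complex.normSq (ψ a b c) = 1)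
    (ρAB : Matrix (Fin 2 × Fin 2) (Fin 2 × Fin 2) ℂ)
    (hAB : ρAB = Matrix.of fun p q : Fin 2 × Fin 2 =>
      ∑ γ : Fin 2, ψ p.1 p.2 γ * (starRingEnd ℂ) (ψ q.1 q.2 γ))
    (ρBC : Matrix (Fin 2 × Fin 2) (Fin 2 × Fin 2) ℂ)
    (hBC : ρBC = Matrix.of fun p q : Fin 2 × Fin 2 =>
      ∑ a : Fin 2, ψ a p.1 p.2 * (starRingEnd ℂ) (ψ a q.1 q.2))
    (ρB : Matrix (Fin 2) (Fin 2) ℂ)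
    (hB : ρB = Matrix.of fun b b' : Fin 2 =>
      ∑ a : Fin 2, ∑ γ : Fin 2, ψ a b γ * (starRingEnd ℂ) (ψ a b' γ))
    (b : Fin 3 → ℝ) (hb : ∀ j, b j = ((ρB * pauli j.succ).trace).re)
    (hb1 : norm3 b < 1)
    (γb : ℝ) (hγb : γb = 1 / Real.sqrt (1 - norm3 b ^ 2)) :
    Real.sqrt ((4 * Real.pi / 3) * γb ^ 4 * |(Theta ρAB).det|)
      + Real.sqrt ((4 * Real.pi / 3) * γb ^ 4 * |(Theta ρBC).det|)
      ≤ Real.sqrt (4 * Real.pi / 3) := by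
  have hb2 : norm3 b ^ 2 = ∑ j, b j ^ 2 := Real.sq_sqrt (by positivity)
  have hpos : 0 < 1 - norm3 b ^ 2 :=
    sub_pos.mpr (pow_lt_one₀ (Real.sqrt_nonneg _) hb1 two_ne_zero)
  have hγ : γb ^ 2 * (1 - norm3 b ^ 2) = 1 := by
    rw [hγb, div_pow, Real.sq_sqrt hpos.le, one_pow, one_div_mul_cancel hpos.ne']
  have hAB' : ρAB = ensembleState (sliceC ψ) := hAB
  have hBC' : ρBC = ensembleState (sliceA ψ) := hBC
  have monogamy : √|(Theta ρAB).det| + √|(Theta ρBC).det| ≤ 1 - norm3 b ^ 2 := by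
    rw [hAB', hBC']
    refine (add_le_add (sqrt_abs_det_Theta_ensembleState_le _)
      (sqrt_abs_det_Theta_ensembleState_le _)).trans_eq ?_
    simp only [spinFlipOverlap_sliceC_add_sliceA, hunit, one_pow, hb2, hb, hB, leftMarginal_sliceA]
  have hk : 0 ≤ 4 * Real.pi / 3 := by positivity
  calc _ = √(4 * Real.pi / 3) * (γb ^ 2 * (√|(Theta ρAB).det| + √|(Theta ρBC).det|)) := by
        rw [sqrt_mul_pow_four_mul hk, sqrt_mul_pow_four_mul hk]
        ring
    _ ≤ √(4 * Real.pi / 3) * (γb ^ 2 * (1 - norm3 b ^ 2)) := by gcongr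
    _ = √(4 * Real.pi / 3) := by rw [hγ, mul_one]
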